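/- Let θ = (θ₁, θ₂, θ₃) ∈ ℝ³ with θ_i > 0 for all i and θ₁ + θ₂ + θ₃ = π, and define ψ_θ : ℝ³ → ℝ by ψ_θ(y) = G(y) − θ₁y₁ − θ₂y₂ − θ₃y₃. Then ψ_θ is convex, ψ_θ(y + (k, k, k)) = ψ_θ(y) for all y ∈ ℝ³ and k ∈ ℝ, and ψ_θ(y) → +∞ as max_{i,j}|y_i − y_j| → ∞. -/

import Mathlib

/-- The Lobachevsky function `Λ(t) = -∫₀ᵗ log |2 sin s| ds`. -/
noncomputable def Lob (t : ℝ) : ℝ := -∫ s in (0 : ℝ)..t, Real.log |2 * Real.sin s|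

/-- The inner angle, opposite the edge of length `x i`, of the generalized Euclidean
triangle of edge lengths `x 0, x 1, x 2` (clamped arccos convention). -/
noncomputable def ang (i : Fin 3) (x : Fin 3 → ℝ) : ℝ :=
  Real.arccos (((x (i + 1)) ^ 2 + (x (i + 2)) ^ 2 - (x i) ^ 2) / (2 * x (i + 1) * x (i + 2)))

/-- `G(y) = Σᵢ (Λ(aᵢ) + aᵢ yᵢ)`, where `aᵢ` are the inner angles of the generalized
Euclidean triangle of edge lengths `e^{y₁}, e^{y₂}, e^{y₃}`. -/
noncomputable def Gfn (y : Fin 3 → ℝ) : ℝ :=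
  ∑ i : Fin 3,
    (Lob (ang i (fun m => Real.exp (y m))) + ang i (fun m => Real.exp (y m)) * y i)

/-- `ψ_θ(y) = G(y) − θ₁y₁ − θ₂y₂ − θ₃y₃`. -/
noncomputable def psiT (θ : Fin 3 → ℝ) (y : Fin 3 → ℝ) : ℝ :=
  Gfn y - (θ 0 * y 0 + θ 1 * y 1 + θ 2 * y 2)

/-!
Write `Λ(b) = Σ Λ(bᵢ)` for a triple `b` of nonnegative angles with sum `π`. Since `Λ'' = -cot` and
`cot u cot v + cot v cot w + cot w cot u = 1` when `u + v + w = π`, the function `Λ` is concave on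
the simplex of such triples. Its gradient at the angles `a` of a triangle is `-log (2 sin aᵢ)`,
which by the law of sines is `-yᵢ` up to a common constant. Hence `a` maximises `b ↦ Λ(b) + ⟨b, y⟩`
and `G(y) = max_b (Λ(b) + ⟨b, y⟩)`; for degenerate triangles, where `G(y) = π max yᵢ`, this follows
by moving the longest edge back to the boundary of the triangle inequality.

As a maximum of affine functions, `G` is convex. Rescaling the edges keeps the angles, whose sum is
`π = Σ θᵢ`, so `ψ_θ` is invariant under translation. Finally the vertices `b` of the simplex give
`G(y) ≥ π max yᵢ`, that is `ψ_θ(y) ≥ Σ θⱼ (max yᵢ - yⱼ) ≥ (min θ) max |yᵢ - yⱼ|`.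
-/

section

open Real Set Filter Topology
open scoped Matrix EuclideanGeometry

section LobachevskyFunction

theorem intervalIntegrable_log_abs_two_mul_sin (a b : ℝ) :
    IntervalIntegrable (fun s => log |2 * sin s|) MeasureTheory.volume a b := by
  have hsin : MeromorphicOn (fun s : ℝ => 2 * sin s) (uIcc a b) :=
    fun _ _ => (analyticAt_const.mul analyticAt_sin).meromorphicAt
  simpa only [Function.comp_def, log_abs] using hsin.intervalIntegrable_log

theorem continuous_Lob : Continuous Lob :=
  (intervalIntegral.continuous_primitive intervalIntegrable_log_abs_two_mul_sin 0).neg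

theorem hasDerivAt_Lob {t : ℝ} (ht : sin t ≠ 0) :
    HasDerivAt Lob (-log (2 * sin t)) t := by
  have hmeas : Measurable fun s => log |2 * sin s| := by fun_prop
  have hcont : ContinuousAt (fun s => log |2 * sin s|) t :=
    ContinuousAt.log (by fun_prop) (by simpa using ht)
  rw [← log_abs]
  exact (intervalIntegral.integral_hasDerivAt_right (intervalIntegrable_log_abs_two_mul_sin 0 t)
    hmeas.stronglyMeasurable.stronglyMeasurableAtFilter hcont).neg

theorem Lob_zero : Lob 0 = 0 := by simp [Lob]

theorem Lob_pi : Lob π = 0 := by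
  have hsplit : ∫ s in (0 : ℝ)..π, log |2 * sin s| = ∫ s in (0 : ℝ)..π, (log 2 + log (sin s)) :=
    intervalIntegral.integral_congr_Ioo_of_le pi_pos.le fun s hs => by
      simp only [log_abs, log_mul two_ne_zero (sin_pos_of_mem_Ioo hs).ne']
  have hint : IntervalIntegrable (fun s => log (sin s)) MeasureTheory.volume 0 π :=
    intervalIntegrable_log_sin
  rw [Lob, hsplit, intervalIntegral.integral_add intervalIntegrable_const hint,
    integral_log_sin_zero_pi, intervalIntegral.integral_const, smul_eq_mul]
  ring

end LobachevskyFunction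

section AngleSimplex

/-- The closed simplex of angle triples of possibly degenerate Euclidean triangles. -/
def angleSimplex : Set (Fin 3 → ℝ) := {a | (∀ i, 0 ≤ a i) ∧ ∑ i, a i = π}

/-- The relative interior of `angleSimplex`: the angle triples of nondegenerate triangles. -/
def openAngleSimplex : Set (Fin 3 → ℝ) := {a | (∀ i, 0 < a i) ∧ ∑ i, a i = π}

variable {a b d : Fin 3 → ℝ}

theorem openAngleSimplex_subset_angleSimplex : openAngleSimplex ⊆ angleSimplex :=
  fun _ ha => ⟨fun i => (ha.1 i).le, ha.2⟩

theorem single_pi_mem_angleSimplex (i : Fin 3) : Pi.single i π ∈ angleSimplex :=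
  ⟨show (0 : Fin 3 → ℝ) ≤ Pi.single i π from Pi.single_nonneg.2 pi_pos.le, by simp⟩

theorem le_pi_of_mem_angleSimplex (ha : a ∈ angleSimplex) (i : Fin 3) : a i ≤ π :=
  (Finset.single_le_sum (fun j _ => ha.1 j) (Finset.mem_univ i)).trans_eq ha.2

theorem sin_pos_of_mem_openAngleSimplex (ha : a ∈ openAngleSimplex) (i : Fin 3) :
    0 < sin (a i) :=
  have hlt : a i < ∑ j, a j := Finset.single_lt_sum (j := i + 1) (by simp) (Finset.mem_univ i)
    (Finset.mem_univ _) (ha.1 _) fun k _ _ => (ha.1 k).le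
  sin_pos_of_pos_of_lt_pi (ha.1 i) (ha.2 ▸ hlt)

theorem add_smul_sub_mem_openAngleSimplex (ha : a ∈ openAngleSimplex) (hb : b ∈ angleSimplex)
    {t : ℝ} (ht : t ∈ Ico (0 : ℝ) 1) : a + t • (b - a) ∈ openAngleSimplex := by
  refine ⟨fun i => ?_, ?_⟩
  · have hconvex : (a + t • (b - a)) i = (1 - t) * a i + t * b i := by
      simp only [Pi.add_apply, Pi.smul_apply, Pi.sub_apply, smul_eq_mul]
      ring
    rw [hconvex]
    exact add_pos_of_pos_of_nonneg (mul_pos (sub_pos.2 ht.2) (ha.1 i)) (mul_nonneg ht.1 (hb.1 i))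
  · simp [Finset.sum_add_distrib, ← Finset.mul_sum, ha.2, hb.2]

theorem cot_mul_cot_add_cot_mul_cot_add_cot_mul_cot {u v w : ℝ} (hu : sin u ≠ 0) (hv : sin v ≠ 0)
    (hw : sin w ≠ 0) (h : u + v + w = π) : cot u * cot v + cot v * cot w + cot w * cot u = 1 := by
  obtain rfl : w = π - (u + v) := by linarith
  rw [sin_pi_sub, sin_add] at hw
  simp only [cot_eq_cos_div_sin, sin_pi_sub, cos_pi_sub, sin_add, cos_add]
  field_simp
  ring

theorem cot_add_cot_pos {u v : ℝ} (hu : 0 < sin u) (hv : 0 < sin v) (h : 0 < sin (u + v)) :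
    0 < cot u + cot v := by
  have hadd : cot u + cot v = sin (u + v) / (sin u * sin v) := by
    rw [cot_eq_cos_div_sin, cot_eq_cos_div_sin, sin_add]
    field_simp
    ring
  rw [hadd]
  positivity

theorem sq_mul_add_sq_mul_add_sq_mul_nonneg {p q r x y z : ℝ} (hpr : 0 < p + r)
    (hpqr : 0 ≤ p * q + q * r + r * p) (hxyz : x + y + z = 0) :
    0 ≤ x ^ 2 * p + y ^ 2 * q + z ^ 2 * r := by
  obtain rfl : z = -(x + y) := by linarith
  refine nonneg_of_mul_nonneg_right ?_ hpr
  calc 0 ≤ ((p + r) * x + r * y) ^ 2 + (p * q + q * r + r * p) * y ^ 2 := by positivity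
    _ = (p + r) * (x ^ 2 * p + y ^ 2 * q + (-(x + y)) ^ 2 * r) := by ring

theorem sum_sq_mul_cot_nonneg (ha : a ∈ openAngleSimplex) (hd : ∑ i, d i = 0) :
    0 ≤ ∑ i, d i ^ 2 * cot (a i) := by
  have hsin := sin_pos_of_mem_openAngleSimplex ha
  have hsum : a 0 + a 1 + a 2 = π := by rw [← Fin.sum_univ_three, ha.2]
  rw [Fin.sum_univ_three] at hd ⊢
  refine sq_mul_add_sq_mul_add_sq_mul_nonneg ?_ ?_ hd
  · refine cot_add_cot_pos (hsin 0) (hsin 2) ?_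
    rw [show a 0 + a 2 = π - a 1 by linarith, sin_pi_sub]
    exact hsin 1
  · rw [cot_mul_cot_add_cot_mul_cot_add_cot_mul_cot (hsin 0).ne' (hsin 1).ne' (hsin 2).ne' hsum]
    exact zero_le_one

end AngleSimplex

section IdealVolume

/-- The volume of the ideal hyperbolic tetrahedron whose dihedral angles at the edges of one
vertex are `a 0, a 1, a 2` (Milnor's formula); it is the Legendre dual of `Gfn`. -/
noncomputable def idealVolume (a : Fin 3 → ℝ) : ℝ := ∑ i, Lob (a i)

variable {a b d : Fin 3 → ℝ} {t : ℝ}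

theorem continuous_idealVolume : Continuous idealVolume :=
  continuous_finsetSum _ fun i _ => continuous_Lob.comp (continuous_apply i)

theorem idealVolume_single_pi (i : Fin 3) : idealVolume (Pi.single i π) = 0 :=
  Finset.sum_eq_zero fun j _ => by
    obtain rfl | hij := eq_or_ne j i
    · rw [Pi.single_eq_same, Lob_pi]
    · rw [Pi.single_eq_of_ne hij, Lob_zero]

theorem hasDerivAt_add_smul_apply {ι : Type*} (a d : ι → ℝ) (i : ι) (t : ℝ) :
    HasDerivAt (fun s : ℝ => (a + s • d) i) (d i) t := by
  simpa using ((hasDerivAt_id t).mul_const (d i)).const_add (a i)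

theorem hasDerivAt_idealVolume_add_smul (h : ∀ i, sin ((a + t • d) i) ≠ 0) :
    HasDerivAt (fun s : ℝ => idealVolume (a + s • d))
      (-(d ⬝ᵥ fun i => log (2 * sin ((a + t • d) i)))) t := by
  have hterm (i : Fin 3) := (hasDerivAt_Lob (h i)).comp t (hasDerivAt_add_smul_apply a d i t)
  refine (HasDerivAt.fun_sum fun i _ => hterm i).congr_deriv ?_
  simp only [dotProduct, neg_mul, Finset.sum_neg_distrib, mul_comm (d _)]

theorem hasDerivAt_dotProduct_log_sin_add_smul {ι : Type*} [Fintype ι] {a d : ι → ℝ}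
    (h : ∀ i, sin ((a + t • d) i) ≠ 0) :
    HasDerivAt (fun s : ℝ => d ⬝ᵥ fun i => log (2 * sin ((a + s • d) i)))
      (∑ i, d i ^ 2 * cot ((a + t • d) i)) t := by
  refine HasDerivAt.fun_sum fun i _ => ?_
  have hlog := (((hasDerivAt_add_smul_apply a d i t).sin.const_mul 2).log
    (mul_ne_zero two_ne_zero (h i))).const_mul (d i)
  refine hlog.congr_deriv ?_
  rw [cot_eq_cos_div_sin]
  have hi := h i
  field_simp

theorem concaveOn_idealVolume_add_smul_sub (ha : a ∈ openAngleSimplex) (hb : b ∈ angleSimplex) :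
    ConcaveOn ℝ (Icc (0 : ℝ) 1) fun t => idealVolume (a + t • (b - a)) := by
  have hmem {t : ℝ} (ht : t ∈ interior (Icc (0 : ℝ) 1)) : a + t • (b - a) ∈ openAngleSimplex :=
    add_smul_sub_mem_openAngleSimplex ha hb (Ioo_subset_Ico_self (by rwa [interior_Icc] at ht))
  have hsin {t : ℝ} (ht : t ∈ interior (Icc (0 : ℝ) 1)) (i : Fin 3) :=
    (sin_pos_of_mem_openAngleSimplex (hmem ht) i).ne'
  have hsum : ∑ i, (b - a) i = 0 := by simp [ha.2, hb.2]
  refine concaveOn_of_hasDerivWithinAt2_nonpos (convex_Icc 0 1)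
    (continuous_idealVolume.comp (by fun_prop)).continuousOn
    (fun t ht => (hasDerivAt_idealVolume_add_smul (hsin ht)).hasDerivWithinAt)
    (fun t ht => (hasDerivAt_dotProduct_log_sin_add_smul (hsin ht)).neg.hasDerivWithinAt)
    fun t ht => neg_nonpos.2 (sum_sq_mul_cot_nonneg (hmem ht) hsum)

theorem idealVolume_le_sub_dotProduct (ha : a ∈ openAngleSimplex) (hb : b ∈ angleSimplex) :
    idealVolume b ≤ idealVolume a - (b - a) ⬝ᵥ fun i => log (2 * sin (a i)) := by
  have hderiv := hasDerivAt_idealVolume_add_smul (a := a) (d := b - a) (t := 0)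
    (by simpa using fun i => (sin_pos_of_mem_openAngleSimplex ha i).ne')
  have hslope := (concaveOn_idealVolume_add_smul_sub ha hb).slope_le_of_hasDerivAt
    (x := (0 : ℝ)) (y := (1 : ℝ)) (by simp) (by simp) zero_lt_one hderiv
  simp only [slope_def_field, one_smul, add_sub_cancel, zero_smul, add_zero, sub_zero,
    div_one] at hslope
  linarith

end IdealVolume

section Triangle

/-- The strict triangle inequalities for edge lengths `x 0, x 1, x 2`, which force them to be
positive. -/
def IsTriangle (x : Fin 3 → ℝ) : Prop := ∀ i, x i < x (i + 1) + x (i + 2)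

/-- The triple of inner angles of the generalized Euclidean triangle of edge lengths `x`. -/
noncomputable def angles (x : Fin 3 → ℝ) : Fin 3 → ℝ := fun i => ang i x

variable {x : Fin 3 → ℝ}

theorem eq_or_eq_add_one_or_eq_add_two (i j : Fin 3) : j = i ∨ j = i + 1 ∨ j = i + 2 := by
  decide +revert

theorem IsTriangle.pos (h : IsTriangle x) (i : Fin 3) : 0 < x i := by
  have h₁ := h (i + 1)
  have h₂ := h (i + 2)
  simp only [add_assoc, Fin.reduceAdd, add_zero] at h₁ h₂
  linarith

theorem ang_smul {k : ℝ} (hk : k ≠ 0) (i : Fin 3) (x : Fin 3 → ℝ) :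
    ang i (k • x) = ang i x := by
  simp only [ang, Pi.smul_apply, smul_eq_mul]
  rw [show (k * x (i + 1)) ^ 2 + (k * x (i + 2)) ^ 2 - (k * x i) ^ 2
      = k ^ 2 * (x (i + 1) ^ 2 + x (i + 2) ^ 2 - x i ^ 2) by ring,
    show 2 * (k * x (i + 1)) * (k * x (i + 2)) = k ^ 2 * (2 * x (i + 1) * x (i + 2)) by ring,
    mul_div_mul_left _ _ (pow_ne_zero 2 hk)]

theorem ang_eq_angle {V P : Type*} [NormedAddCommGroup V] [InnerProductSpace ℝ V] [MetricSpace P]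
    [NormedAddTorsor V P] {p : Fin 3 → P} (hp : ∀ i, x i = dist (p (i + 1)) (p (i + 2)))
    (i : Fin 3) : ang i x = ∠ (p (i + 1)) (p i) (p (i + 2)) := by
  rw [EuclideanGeometry.angle, InnerProductGeometry.angle,
    real_inner_eq_norm_mul_self_add_norm_mul_self_sub_norm_sub_mul_self_div_two,
    vsub_sub_vsub_cancel_right, ← dist_eq_norm_vsub, ← dist_eq_norm_vsub, ← dist_eq_norm_vsub]
  simp only [ang, hp, add_assoc, Fin.reduceAdd, add_zero]
  rw [dist_comm (p i)]
  congr 1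
  ring

theorem IsTriangle.ang_pos (h : IsTriangle x) (i : Fin 3) : 0 < ang i x := by
  have h₁ := h (i + 1)
  have h₂ := h (i + 2)
  have hpos₁ := h.pos (i + 1)
  have hpos₂ := h.pos (i + 2)
  simp only [add_assoc, Fin.reduceAdd, add_zero] at h₁ h₂
  rw [ang, arccos_pos, div_lt_one (by positivity)]
  nlinarith [mul_pos (sub_pos.2 h₁) (sub_pos.2 h₂)]

theorem IsTriangle.sq_eq (h : IsTriangle x) (i : Fin 3) :
    x i ^ 2 = x (i + 1) ^ 2 + x (i + 2) ^ 2 - 2 * x (i + 1) * x (i + 2) * cos (ang i x) := by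
  have hpos := h.pos i
  have hpos₁ := h.pos (i + 1)
  have hpos₂ := h.pos (i + 2)
  have hge : -1 ≤ (x (i + 1) ^ 2 + x (i + 2) ^ 2 - x i ^ 2) / (2 * x (i + 1) * x (i + 2)) := by
    rw [le_div_iff₀ (by positivity)]
    nlinarith [h i]
  have hle := (arccos_pos.1 (h.ang_pos i)).le
  rw [ang, cos_arccos hge hle]
  field_simp
  ring

theorem IsTriangle.exists_dist_eq (h : IsTriangle x) :
    ∃ p : Fin 3 → ℂ, ∀ i, x i = dist (p (i + 1)) (p (i + 2)) := by
  have h₁ := h.pos 1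
  have h₂ := h.pos 2
  refine ⟨![0, x 2, x 1 * Complex.exp (ang 0 x * Complex.I)], fun i => ?_⟩
  fin_cases i
  · have hsq : dist (x 2 : ℂ) (x 1 * Complex.exp (ang 0 x * Complex.I)) ^ 2 = x 0 ^ 2 := by
      rw [Complex.dist_eq, Complex.sq_norm, Complex.normSq_apply, h.sq_eq 0, zero_add, zero_add]
      simp only [Complex.sub_re, Complex.sub_im, Complex.mul_re, Complex.mul_im, Complex.ofReal_re,
        Complex.ofReal_im, Complex.exp_ofReal_mul_I_re, Complex.exp_ofReal_mul_I_im]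
      linear_combination x 1 ^ 2 * sin_sq_add_cos_sq (ang 0 x)
    exact ((pow_left_inj₀ dist_nonneg (h.pos 0).le two_ne_zero).1 hsq).symm
  · simp [abs_of_pos h₁]
  · simp [abs_of_pos h₂]

theorem IsTriangle.angles_mem_openAngleSimplex (h : IsTriangle x) :
    angles x ∈ openAngleSimplex := by
  refine ⟨h.ang_pos, ?_⟩
  obtain ⟨p, hp⟩ := h.exists_dist_eq
  have hne : p 1 ≠ p 2 := dist_pos.1 (hp 0 ▸ h.pos 0)
  have hsum := EuclideanGeometry.angle_add_angle_add_angle_eq_pi (p 0) hne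
  simp only [angles, Fin.sum_univ_three, ang_eq_angle hp, Fin.reduceAdd, zero_add]
  linarith

theorem IsTriangle.sin_ang_mul (h : IsTriangle x) (i : Fin 3) :
    sin (ang i x) * x (i + 1) = sin (ang (i + 1) x) * x i := by
  obtain ⟨p, hp⟩ := h.exists_dist_eq
  have hlaw := EuclideanGeometry.law_sin (p (i + 1)) (p i) (p (i + 2))
  rw [ang_eq_angle hp, ang_eq_angle hp, hp, hp]
  simp only [add_assoc, Fin.reduceAdd, add_zero]
  rw [dist_comm, hlaw, dist_comm]

theorem IsTriangle.exists_eq_mul_two_mul_sin_ang (h : IsTriangle x) :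
    ∃ r, 0 < r ∧ ∀ i, x i = r * (2 * sin (ang i x)) := by
  have hsin := sin_pos_of_mem_openAngleSimplex h.angles_mem_openAngleSimplex
  have hsin₀ : 0 < sin (ang 0 x) := hsin 0
  have law₀ : sin (ang 0 x) * x 1 = sin (ang 1 x) * x 0 := h.sin_ang_mul 0
  have law₂ : sin (ang 2 x) * x 0 = sin (ang 0 x) * x 2 := h.sin_ang_mul 2
  refine ⟨x 0 / (2 * sin (ang 0 x)), div_pos (h.pos 0) (by positivity), fun i => ?_⟩
  fin_cases i
  · change x 0 = _ * (2 * sin (ang 0 x))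
    field_simp
  · change x 1 = _ * (2 * sin (ang 1 x))
    field_simp
    linarith
  · change x 2 = _ * (2 * sin (ang 2 x))
    field_simp
    linarith

theorem angles_eq_single_of_add_le (hx : ∀ i, 0 < x i) {i : Fin 3}
    (h : x (i + 1) + x (i + 2) ≤ x i) :
    angles x = Pi.single i π := by
  have h₀ := hx i
  have h₁ := hx (i + 1)
  have h₂ := hx (i + 2)
  ext j
  obtain rfl | rfl | rfl := eq_or_eq_add_one_or_eq_add_two i j
  · rw [Pi.single_eq_same, angles, ang, arccos_eq_pi, div_le_iff₀ (by positivity)]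
    nlinarith
  · rw [Pi.single_eq_of_ne (by simp), angles, ang, arccos_eq_zero]
    simp only [add_assoc, Fin.reduceAdd, add_zero]
    rw [le_div_iff₀ (by positivity)]
    nlinarith
  · rw [Pi.single_eq_of_ne (by simp), angles, ang, arccos_eq_zero]
    simp only [add_assoc, Fin.reduceAdd, add_zero]
    rw [le_div_iff₀ (by positivity)]
    nlinarith

theorem not_isTriangle_iff : ¬IsTriangle x ↔ ∃ i, x (i + 1) + x (i + 2) ≤ x i := by
  simp only [IsTriangle, not_forall, not_lt]

theorem angles_mem_angleSimplex (hx : ∀ i, 0 < x i) : angles x ∈ angleSimplex := by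
  by_cases h : IsTriangle x
  · exact openAngleSimplex_subset_angleSimplex h.angles_mem_openAngleSimplex
  · obtain ⟨i, hi⟩ := not_isTriangle_iff.1 h
    rw [angles_eq_single_of_add_le hx hi]
    exact single_pi_mem_angleSimplex i

end Triangle

section LegendreDuality

/-- The edge lengths `e^{y 0}, e^{y 1}, e^{y 2}` of the triangle with logarithmic coordinates
`y`. -/
noncomputable def edgeLengths (y : Fin 3 → ℝ) : Fin 3 → ℝ := fun i => exp (y i)

variable {b y : Fin 3 → ℝ}

theorem edgeLengths_pos (y : Fin 3 → ℝ) (i : Fin 3) : 0 < edgeLengths y i := exp_pos _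

theorem Gfn_eq_idealVolume_add_dotProduct (y : Fin 3 → ℝ) :
    Gfn y = idealVolume (angles (edgeLengths y)) + angles (edgeLengths y) ⬝ᵥ y :=
  Finset.sum_add_distrib

theorem continuous_Gfn : Continuous Gfn := by
  have hang (i : Fin 3) : Continuous fun y => ang i (edgeLengths y) := by
    unfold ang edgeLengths
    exact continuous_arccos.comp (Continuous.div (by fun_prop) (by fun_prop) fun y => by positivity)
  exact continuous_finsetSum _ fun i _ =>
    (continuous_Lob.comp (hang i)).add ((hang i).mul (continuous_apply i))

theorem Gfn_eq_of_add_le {i : Fin 3}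
    (h : edgeLengths y (i + 1) + edgeLengths y (i + 2) ≤ edgeLengths y i) : Gfn y = π * y i := by
  rw [Gfn_eq_idealVolume_add_dotProduct, angles_eq_single_of_add_le (edgeLengths_pos y) h,
    idealVolume_single_pi, single_dotProduct, zero_add]

theorem IsTriangle.idealVolume_add_dotProduct_le_Gfn (h : IsTriangle (edgeLengths y))
    (hb : b ∈ angleSimplex) : idealVolume b + b ⬝ᵥ y ≤ Gfn y := by
  set a := angles (edgeLengths y)
  have ha : a ∈ openAngleSimplex := h.angles_mem_openAngleSimplex
  obtain ⟨r, hr, hlaw⟩ := h.exists_eq_mul_two_mul_sin_ang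
  have hy : y = (fun i => log (2 * sin (a i))) + fun _ => log r := by
    ext i
    have hsin := sin_pos_of_mem_openAngleSimplex ha i
    rw [Pi.add_apply, add_comm, ← log_mul hr.ne' (by positivity), ← log_exp (y i)]
    exact congrArg log (hlaw i)
  have hconst : (b - a) ⬝ᵥ (fun _ => log r) = 0 := by
    simp [dotProduct, ← Finset.sum_mul, ha.2, hb.2]
  have htangent : (b - a) ⬝ᵥ y = (b - a) ⬝ᵥ fun i => log (2 * sin (a i)) := by
    rw [hy, dotProduct_add, hconst, add_zero]
  have hle := idealVolume_le_sub_dotProduct ha hb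
  rw [← htangent, sub_dotProduct] at hle
  rw [Gfn_eq_idealVolume_add_dotProduct]
  linarith

theorem continuous_sub_single {ι : Type*} [DecidableEq ι] (y : ι → ℝ) (i : ι) :
    Continuous fun t : ℝ => y - Pi.single i t :=
  continuous_const.sub (continuous_single (A := fun _ => ℝ) i)

theorem eventually_isTriangle_edgeLengths_sub_single {i : Fin 3}
    (h : edgeLengths y (i + 1) + edgeLengths y (i + 2) = edgeLengths y i) :
    ∀ᶠ t in 𝓝[>] (0 : ℝ), IsTriangle (edgeLengths (y - Pi.single i t)) := by
  have hcont (j : Fin 3) : Continuous fun t : ℝ => edgeLengths (y - Pi.single i t) j :=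
    continuous_exp.comp ((continuous_apply j).comp (continuous_sub_single y i))
  have hpersist (j : Fin 3) (hj : edgeLengths y j < edgeLengths y (j + 1) + edgeLengths y (j + 2)) :
      ∀ᶠ t in 𝓝[>] (0 : ℝ), edgeLengths (y - Pi.single i t) j <
        edgeLengths (y - Pi.single i t) (j + 1) + edgeLengths (y - Pi.single i t) (j + 2) :=
    nhdsWithin_le_nhds <| (hcont j).continuousAt.eventually_lt
      ((hcont (j + 1)).add (hcont (j + 2))).continuousAt (by simpa using hj)
  refine eventually_all.2 fun j => ?_
  obtain rfl | rfl | rfl := eq_or_eq_add_one_or_eq_add_two i j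
  · filter_upwards [self_mem_nhdsWithin] with t ht
    have hlt : exp (y j - t) < edgeLengths y j := exp_lt_exp.2 (sub_lt_self _ ht)
    simpa [edgeLengths] using hlt.trans_eq h.symm
  all_goals
    refine hpersist _ ?_
    simp only [add_assoc, Fin.reduceAdd, add_zero, ← h]
    linarith [edgeLengths_pos y (i + 1), edgeLengths_pos y (i + 2)]

theorem mem_closure_isTriangle_of_add_eq {i : Fin 3}
    (h : edgeLengths y (i + 1) + edgeLengths y (i + 2) = edgeLengths y i) :
    y ∈ closure {z | IsTriangle (edgeLengths z)} := by
  have hlim : Tendsto (fun t : ℝ => y - Pi.single i t) (𝓝[>] 0) (𝓝 y) :=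
    ((continuous_sub_single y i).tendsto' 0 y (by simp)).mono_left nhdsWithin_le_nhds
  exact mem_closure_of_tendsto hlim (eventually_isTriangle_edgeLengths_sub_single h)

theorem idealVolume_add_dotProduct_le_Gfn_of_mem_closure (hb : b ∈ angleSimplex)
    (hy : y ∈ closure {z | IsTriangle (edgeLengths z)}) : idealVolume b + b ⬝ᵥ y ≤ Gfn y :=
  closure_minimal (fun _ hz => IsTriangle.idealVolume_add_dotProduct_le_Gfn hz hb)
    (isClosed_le (by fun_prop) continuous_Gfn) hy

theorem idealVolume_add_dotProduct_le_pi_mul (hb : b ∈ angleSimplex) {i : Fin 3}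
    (h : edgeLengths y (i + 1) + edgeLengths y (i + 2) ≤ edgeLengths y i) :
    idealVolume b + b ⬝ᵥ y ≤ π * y i := by
  set s := edgeLengths y (i + 1) + edgeLengths y (i + 2)
  have hs : 0 < s := add_pos (edgeLengths_pos y _) (edgeLengths_pos y _)
  have hlog : log s ≤ y i := (log_le_iff_le_exp hs).2 h
  set z := y - Pi.single i (y i - log s)
  have hzi : z i = log s := by simp [z]
  have hz : edgeLengths z (i + 1) + edgeLengths z (i + 2) = edgeLengths z i := by
    rw [show edgeLengths z i = s by rw [edgeLengths, hzi, exp_log hs]]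
    simp [z, s, edgeLengths]
  have hle := idealVolume_add_dotProduct_le_Gfn_of_mem_closure hb
    (mem_closure_isTriangle_of_add_eq hz)
  rw [Gfn_eq_of_add_le hz.le, hzi, dotProduct_sub, dotProduct_single] at hle
  have hbi := mul_le_mul_of_nonneg_right (le_pi_of_mem_angleSimplex hb i) (sub_nonneg.2 hlog)
  linarith

theorem idealVolume_add_dotProduct_le_Gfn (hb : b ∈ angleSimplex) (y : Fin 3 → ℝ) :
    idealVolume b + b ⬝ᵥ y ≤ Gfn y := by
  by_cases h : IsTriangle (edgeLengths y)
  · exact h.idealVolume_add_dotProduct_le_Gfn hb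
  · obtain ⟨i, hi⟩ := not_isTriangle_iff.1 h
    rw [Gfn_eq_of_add_le hi]
    exact idealVolume_add_dotProduct_le_pi_mul hb hi

theorem mul_le_Gfn (y : Fin 3 → ℝ) (i : Fin 3) : π * y i ≤ Gfn y := by
  simpa only [idealVolume_single_pi, zero_add, single_dotProduct] using
    idealVolume_add_dotProduct_le_Gfn (single_pi_mem_angleSimplex i) y

end LegendreDuality

section Psi

theorem convexOn_of_forall_exists_convexOn_le {𝕜 E β : Type*} [Semiring 𝕜] [PartialOrder 𝕜]
    [AddCommMonoid E] [AddCommMonoid β] [PartialOrder β] [IsOrderedAddMonoid β] [SMul 𝕜 E]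
    [Module 𝕜 β] [PosSMulMono 𝕜 β] {s : Set E} {f : E → β} (hs : Convex 𝕜 s)
    (h : ∀ x ∈ s, ∃ g, ConvexOn 𝕜 s g ∧ (∀ y ∈ s, g y ≤ f y) ∧ f x ≤ g x) : ConvexOn 𝕜 s f := by
  refine ⟨hs, fun x hx y hy p q hp hq hpq => ?_⟩
  obtain ⟨g, hg, hgf, hfg⟩ := h _ (hs hx hy hp hq hpq)
  calc f (p • x + q • y) ≤ g (p • x + q • y) := hfg
    _ ≤ p • g x + q • g y := hg.2 hx hy hp hq hpq
    _ ≤ p • f x + q • f y := by gcongr <;> apply hgf <;> assumption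

theorem convexOn_Gfn : ConvexOn ℝ univ Gfn := by
  refine convexOn_of_forall_exists_convexOn_le convex_univ fun y _ => ?_
  set a := angles (edgeLengths y)
  have ha : a ∈ angleSimplex := angles_mem_angleSimplex (edgeLengths_pos y)
  exact ⟨fun z => idealVolume a + a ⬝ᵥ z,
    (convexOn_const _ convex_univ).add ((dotProductBilin ℝ ℝ a).convexOn convex_univ),
    fun z _ => idealVolume_add_dotProduct_le_Gfn ha z,
    (Gfn_eq_idealVolume_add_dotProduct y).le⟩

variable {θ : Fin 3 → ℝ}

theorem psiT_eq_Gfn_sub_dotProduct (θ y : Fin 3 → ℝ) : psiT θ y = Gfn y - θ ⬝ᵥ y := by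
  rw [psiT, dotProduct, Fin.sum_univ_three]

theorem convexOn_psiT (θ : Fin 3 → ℝ) : ConvexOn ℝ univ (psiT θ) :=
  (convexOn_Gfn.sub ((dotProductBilin ℝ ℝ θ).concaveOn convex_univ)).congr
    fun y _ => (psiT_eq_Gfn_sub_dotProduct θ y).symm

theorem edgeLengths_add_const (y : Fin 3 → ℝ) (k : ℝ) :
    edgeLengths (y + fun _ => k) = exp k • edgeLengths y := by
  ext i
  simp only [edgeLengths, Pi.add_apply, Pi.smul_apply, smul_eq_mul, exp_add, mul_comm]

theorem Gfn_add_const (y : Fin 3 → ℝ) (k : ℝ) : Gfn (y + fun _ => k) = Gfn y + π * k := by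
  have hangles : angles (edgeLengths (y + fun _ => k)) = angles (edgeLengths y) :=
    funext fun i => by rw [angles, edgeLengths_add_const, ang_smul (exp_ne_zero k), angles]
  have hconst : angles (edgeLengths y) ⬝ᵥ (fun _ => k) = π * k := by
    rw [dotProduct, ← Finset.sum_mul, (angles_mem_angleSimplex (edgeLengths_pos y)).2]
  rw [Gfn_eq_idealVolume_add_dotProduct, Gfn_eq_idealVolume_add_dotProduct, hangles,
    dotProduct_add, hconst, add_assoc]

theorem psiT_add_const (hθ : ∑ i, θ i = π) (y : Fin 3 → ℝ) (k : ℝ) :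
    psiT θ (y + fun _ => k) = psiT θ y := by
  have hconst : θ ⬝ᵥ (fun _ => k) = π * k := by rw [dotProduct, ← Finset.sum_mul, hθ]
  rw [psiT_eq_Gfn_sub_dotProduct, psiT_eq_Gfn_sub_dotProduct, Gfn_add_const, dotProduct_add,
    hconst]
  ring

theorem mul_sub_le_psiT (hθ : θ ∈ angleSimplex) (y : Fin 3 → ℝ) (i j : Fin 3) :
    θ j * (y i - y j) ≤ psiT θ y := by
  obtain ⟨k, hk⟩ := Finite.exists_max y
  calc θ j * (y i - y j) ≤ θ j * (y k - y j) := by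
        gcongr
        exacts [hθ.1 j, hk i]
    _ ≤ ∑ l, θ l * (y k - y l) := Finset.single_le_sum
        (fun l _ => mul_nonneg (hθ.1 l) (sub_nonneg.2 (hk l))) (Finset.mem_univ j)
    _ = π * y k - θ ⬝ᵥ y := by
        simp only [mul_sub, Finset.sum_sub_distrib, ← Finset.sum_mul, hθ.2, dotProduct]
    _ ≤ Gfn y - θ ⬝ᵥ y := by
        gcongr
        exact mul_le_Gfn y k
    _ = psiT θ y := (psiT_eq_Gfn_sub_dotProduct θ y).symm

theorem mul_abs_sub_le_psiT (hθ : θ ∈ angleSimplex) {m : ℝ} (hm : ∀ i, m ≤ θ i) (y : Fin 3 → ℝ)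
    (i j : Fin 3) : m * |y i - y j| ≤ psiT θ y := by
  wlog hij : y j ≤ y i generalizing i j
  · rw [abs_sub_comm]
    exact this j i (le_of_not_ge hij)
  rw [abs_of_nonneg (sub_nonneg.2 hij)]
  exact (mul_le_mul_of_nonneg_right (hm j) (sub_nonneg.2 hij)).trans (mul_sub_le_psiT hθ y i j)

theorem tendsto_psiT_atTop (hθ : θ ∈ openAngleSimplex) :
    Tendsto (psiT θ) (comap (fun y => max (max |y 0 - y 1| |y 0 - y 2|) |y 1 - y 2|) atTop)
      atTop := by
  obtain ⟨i₀, hmin⟩ := Finite.exists_min θ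
  have hle := mul_abs_sub_le_psiT (openAngleSimplex_subset_angleSimplex hθ) hmin
  refine tendsto_atTop_mono (fun y => ?_) (tendsto_comap.const_mul_atTop (hθ.1 i₀))
  rw [mul_max_of_nonneg _ _ (hθ.1 i₀).le, mul_max_of_nonneg _ _ (hθ.1 i₀).le]
  exact max_le (max_le (hle y 0 1) (hle y 0 2)) (hle y 1 2)

end Psi

end

theorem stmt6 (θ : Fin 3 → ℝ) (hpos : ∀ i, 0 < θ i)
    (hsum : θ 0 + θ 1 + θ 2 = Real.pi) :
    ConvexOn ℝ Set.univ (psiT θ) ∧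
    (∀ y : Fin 3 → ℝ, ∀ k : ℝ, psiT θ (y + fun _ => k) = psiT θ y) ∧
    Filter.Tendsto (psiT θ)
      (Filter.comap (fun y : Fin 3 → ℝ => max (max |y 0 - y 1| |y 0 - y 2|) |y 1 - y 2|)
        Filter.atTop)
      Filter.atTop := by
  have hθ : ∑ i, θ i = Real.pi := by rw [Fin.sum_univ_three, hsum]
  exact ⟨convexOn_psiT θ, psiT_add_const hθ, tendsto_psiT_atTop ⟨hpos, hθ⟩⟩
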